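/- Let p ≥ 1, n = 2p−1, and let μ = (1,2,…,p). Let σ₁ and σ₂ be bijections from [p−1] onto {p+1,…,2p−1}, and for a bijection σ from [p−1] onto {p+1,…,2p−1} let μ∘σ ∈ S_n denote the interleaved permutation (1, σ(1), 2, σ(2), …, p−1, σ(p−1), p). If σ₁ and σ₂ differ in at least d positions, i.e., |{k ∈ [p−1] : σ₁(k) ≠ σ₂(k)}| ≥ d, then the translocation distance satisfies d∘(μ∘σ₁, μ∘σ₂) ≥ ⌈2d/3⌉. -/

import Mathlib

/-- `IsMove l l'` holds if `l'` is obtained from `l` by a single translocation: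
removing the element at position `i` and reinserting it at position `j`. -/
def IsMove {α : Type*} (l l' : List α) : Prop :=
  ∃ i j : Fin l.length, l' = (l.eraseIdx i).insertIdx j (l.get i)

/-- `ReachIn step m l l'` holds if `l'` can be obtained from `l` by `m` applications
of the relation `step`. -/
def ReachIn {α : Type*} (step : List α → List α → Prop) : ℕ → List α → List α → Prop
  | 0, l, l' => l = l'
  | m+1, l, l' => ∃ l'', step l l'' ∧ ReachIn step m l'' l'

/-- The one-line notation of a permutation of `Fin n`. -/
def oneLine {n : ℕ} (σ : Equiv.Perm (Fin n)) : List (Fin n) := List.ofFn σ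

/-- The translocation distance: the minimum number of translocations transforming
the one-line notation of `σ` into that of `π`. -/
noncomputable def translocDist {n : ℕ} (σ π : Equiv.Perm (Fin n)) : ℕ :=
  sInf {m | ReachIn IsMove m (oneLine σ) (oneLine π)}

/-!
Deleting the moved entries makes the one-line notations of `σ` and `π` agree, so `ρ = π⁻¹ * σ` is
increasing off a set `S` of at most `translocDist σ π` positions. Suppose that no two consecutive
points are displaced by `ρ`, as happens for two interleavings of the same sequence. A displaced
point `i` whose two neighbours lie outside `S` is squeezed between two fixed points, so `i ∈ S`.
If `i`, `ρ⁻¹ i` and the left neighbour of `i` all lay outside `S`, then `ρ i` and `ρ⁻¹ i` would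
both exceed `i`, an inversion of `ρ` outside `S`. With `a` displaced and `b` fixed points in `S`,
the number of displaced points is thus at most `a + 2b` and at most `2a + b`, and these two bounds
add up to `3 * #S`.
-/

open Finset Equiv

section Moves

variable {α : Type*} {l l' l'' : List α} {m k : ℕ}

lemma IsMove.cons (x : α) (h : IsMove l l') : IsMove (x :: l) (x :: l') := by
  obtain ⟨i, j, rfl⟩ := h
  exact ⟨i.succ, j.succ, by simp⟩

lemma isMove_swap (x y : α) (l : List α) : IsMove (y :: x :: l) (x :: y :: l) :=
  ⟨⟨0, by simp⟩, ⟨1, by simp⟩, rfl⟩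

lemma ReachIn.cons (x : α) (h : ReachIn IsMove m l l') :
    ReachIn IsMove m (x :: l) (x :: l') := by
  induction m generalizing l with
  | zero => exact congrArg (x :: ·) h
  | succ m ih =>
    obtain ⟨t, hlt, htl'⟩ := h
    exact ⟨x :: t, hlt.cons x, ih htl'⟩

lemma ReachIn.trans {step : List α → List α → Prop} (h : ReachIn step m l l')
    (h' : ReachIn step k l' l'') : ReachIn step (m + k) l l'' := by
  induction m generalizing l with
  | zero =>
    obtain rfl : l = l' := h
    rwa [Nat.zero_add]
  | succ m ih =>
    obtain ⟨t, hlt, htl'⟩ := h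
    rw [Nat.succ_add]
    exact ⟨t, hlt, ih htl'⟩

lemma exists_reachIn_isMove_of_perm (h : l.Perm l') : ∃ m, ReachIn IsMove m l l' := by
  induction h with
  | nil => exact ⟨0, rfl⟩
  | cons x _ ih => exact ih.imp fun _ => ReachIn.cons x
  | swap x y l => exact ⟨1, _, isMove_swap x y l, rfl⟩
  | trans _ _ ih ih' =>
    obtain ⟨m, hm⟩ := ih
    obtain ⟨k, hk⟩ := ih'
    exact ⟨m + k, hm.trans hk⟩

lemma filter_eraseIdx_of_not {q : α → Bool} {i : ℕ} (hi : i < l.length) (hq : ¬ q l[i]) :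
    (l.eraseIdx i).filter q = l.filter q := by
  conv_rhs => rw [← List.take_append_drop i l, List.drop_eq_getElem_cons hi]
  rw [List.eraseIdx_eq_take_drop_succ, List.filter_append, List.filter_append,
    List.filter_cons_of_neg hq]

lemma IsMove.exists_filter_eq (h : IsMove l l') :
    ∃ x, ∀ q : α → Bool, ¬ q x → l.filter q = l'.filter q := by
  obtain ⟨i, j, rfl⟩ := h
  refine ⟨l.get i, fun q hq => ?_⟩
  have hj : (j : ℕ) < ((l.eraseIdx i).insertIdx j (l.get i)).length := by grind
  rw [← filter_eraseIdx_of_not i.isLt hq, ← filter_eraseIdx_of_not hj (by simpa using hq),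
    List.eraseIdx_insertIdx_self]

lemma ReachIn.exists_filter_eq (h : ReachIn IsMove m l l') :
    ∃ M : Finset α, #M ≤ m ∧ ∀ q : α → Bool, (∀ x ∈ M, ¬ q x) → l.filter q = l'.filter q := by
  classical
  induction m generalizing l with
  | zero =>
    obtain rfl : l = l' := h
    exact ⟨∅, by simp⟩
  | succ m ih =>
    obtain ⟨t, hlt, htl'⟩ := h
    obtain ⟨x, hx⟩ := hlt.exists_filter_eq
    obtain ⟨M, hcard, hM⟩ := ih htl'
    refine ⟨insert x M, (card_insert_le x M).trans (by lia), fun q hq => ?_⟩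
    rw [forall_mem_insert] at hq
    exact (hx q hq.1).trans (hM q hq.2)

end Moves

section TranslocDist

variable {n : ℕ} (σ π : Perm (Fin n))

lemma oneLine_perm_oneLine : (oneLine σ).Perm (oneLine π) :=
  (Perm.ofFn_comp_perm σ id).trans (Perm.ofFn_comp_perm π id).symm

lemma reachIn_translocDist : ReachIn IsMove (translocDist σ π) (oneLine σ) (oneLine π) :=
  Nat.sInf_mem (exists_reachIn_isMove_of_perm (oneLine_perm_oneLine σ π))

lemma exists_card_le_translocDist_strictMonoOn :
    ∃ S : Finset (Fin n), #S ≤ translocDist σ π ∧ StrictMonoOn (π⁻¹ * σ) (S : Set (Fin n))ᶜ := by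
  obtain ⟨M, hcard, hM⟩ := (reachIn_translocDist σ π).exists_filter_eq
  have hfilter : (oneLine σ).filter (· ∉ M) = (oneLine π).filter (· ∉ M) := hM _ (by simp)
  have hsorted : (oneLine π).Pairwise fun a b => π⁻¹ a < π⁻¹ b := by
    simp [oneLine, List.pairwise_ofFn]
  have hkept := hsorted.filter (· ∉ M)
  rw [← hfilter, List.pairwise_filter, oneLine, List.pairwise_ofFn] at hkept
  refine ⟨M.map σ⁻¹.toEmbedding, by simpa using hcard, fun i hi j hj hij => ?_⟩
  exact hkept hij (by simpa using hi) (by simpa using hj)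

end TranslocDist

section StrictMonoOffSet

variable {α : Type*} [LinearOrder α] {f : α → α} {S : Set α} {i k : α}

lemma le_apply_of_forall_covBy [IsStronglyCoatomic α] (hf : StrictMonoOn f Sᶜ) (hi : i ∉ S)
    (hpred : ∀ j, j ⋖ i → j ∉ S ∧ f j = j) : i ≤ f i := by
  by_contra! hlt
  obtain ⟨j, hle, hji⟩ := exists_le_covBy_of_lt hlt
  obtain ⟨hj, hfix⟩ := hpred j hji
  have := hf hj hi hji.lt
  order

lemma apply_le_of_forall_covBy [IsStronglyAtomic α] (hf : StrictMonoOn f Sᶜ) (hi : i ∉ S)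
    (hsucc : ∀ j, i ⋖ j → j ∉ S ∧ f j = j) : f i ≤ i :=
  le_apply_of_forall_covBy (α := αᵒᵈ) hf.dual hi fun j hj => hsucc j hj.ofDual

lemma le_of_apply_eq_of_forall_covBy [IsStronglyCoatomic α] (hf : StrictMonoOn f Sᶜ) (hk : k ∉ S)
    (hki : f k = i) (hpred : ∀ j, j ⋖ i → j ∉ S ∧ f j = j) : i ≤ k := by
  by_contra! hlt
  obtain ⟨j, hle, hji⟩ := exists_le_covBy_of_lt hlt
  obtain ⟨hj, hfix⟩ := hpred j hji
  have := hf.monotoneOn hk hj hle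
  have := hji.lt
  order

end StrictMonoOffSet

section Counting

variable {α : Type*} [DecidableEq α] [Fintype α] {ρ : Perm α} {S : Finset α}

lemma card_filter_exists_rel_le {r : α → α → Prop} [DecidablePred fun i => ∃ j ∈ S, r i j]
    (hr : Relator.LeftUnique r) (hsep : ∀ ⦃i j⦄, r i j → ρ i = i ∨ ρ j = j) :
    #{i ∈ ρ.support | ∃ j ∈ S, r i j} ≤ #(S \ ρ.support) := by
  refine card_le_card_of_forall_subsingleton r (fun i hi => ?_) fun j _ a ha b hb => hr ha.2 hb.2
  obtain ⟨hi, j, hj, hij⟩ := mem_filter.1 hi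
  exact ⟨j, by simpa [hj] using (hsep hij).resolve_left (Perm.mem_support.1 hi), hij⟩

lemma card_filter_symm_mem_le : #{i ∈ ρ.support | ρ.symm i ∈ S} ≤ #(S ∩ ρ.support) := by
  refine card_le_card_of_injOn ρ.symm (fun i hi => ?_) ρ.symm.injective.injOn
  obtain ⟨hi, hsymm⟩ := mem_filter.1 hi
  exact mem_inter.2 ⟨hsymm, by rwa [← Perm.apply_mem_support, ρ.apply_symm_apply]⟩

end Counting

section Displaced

variable {α : Type*} [LinearOrder α] [Fintype α] {ρ : Perm α} {S : Finset α} {i : α}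

lemma mem_or_exists_covBy_of_mem_support (hsep : ∀ ⦃i j⦄, i ⋖ j → ρ i = i ∨ ρ j = j)
    (hρ : StrictMonoOn ρ (S : Set α)ᶜ) (hi : i ∈ ρ.support) :
    i ∈ S ∨ (∃ j ∈ S, j ⋖ i) ∨ ∃ j ∈ S, i ⋖ j := by
  by_contra! ⟨hiS, hpred, hsucc⟩
  have hmoved : ρ i ≠ i := Perm.mem_support.1 hi
  have hle : i ≤ ρ i := le_apply_of_forall_covBy hρ hiS fun j hj =>
    ⟨fun hjS => hpred j hjS hj, (hsep hj).resolve_right hmoved⟩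
  have hge : ρ i ≤ i := apply_le_of_forall_covBy hρ hiS fun j hj =>
    ⟨fun hjS => hsucc j hjS hj, (hsep hj).resolve_left hmoved⟩
  exact hmoved (hge.antisymm hle)

lemma mem_or_symm_mem_or_exists_covBy_of_mem_support
    (hsep : ∀ ⦃i j⦄, i ⋖ j → ρ i = i ∨ ρ j = j) (hρ : StrictMonoOn ρ (S : Set α)ᶜ)
    (hi : i ∈ ρ.support) : i ∈ S ∨ ρ.symm i ∈ S ∨ ∃ j ∈ S, j ⋖ i := by
  by_contra! ⟨hiS, hsymmS, hpred⟩
  have hmoved : ρ i ≠ i := Perm.mem_support.1 hi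
  have happly : ρ (ρ.symm i) = i := ρ.apply_symm_apply i
  have hfixed : ∀ j, j ⋖ i → j ∉ (S : Set α) ∧ ρ j = j := fun j hj =>
    ⟨fun hjS => hpred j hjS hj, (hsep hj).resolve_right hmoved⟩
  have hle : i ≤ ρ i := le_apply_of_forall_covBy hρ hiS hfixed
  have hle_symm : i ≤ ρ.symm i := le_of_apply_eq_of_forall_covBy hρ hsymmS happly hfixed
  have hge : ρ i ≤ i := by
    simpa only [happly] using hρ.monotoneOn hiS hsymmS hle_symm
  exact hmoved (hge.antisymm hle)

theorem two_mul_card_support_le_of_strictMonoOn (hsep : ∀ ⦃i j⦄, i ⋖ j → ρ i = i ∨ ρ j = j)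
    (hρ : StrictMonoOn ρ (S : Set α)ᶜ) : 2 * #ρ.support ≤ 3 * #S := by
  classical
  let A : Finset α := {i ∈ ρ.support | i ∈ S}
  let I : Finset α := {i ∈ ρ.support | ρ.symm i ∈ S}
  let L : Finset α := {i ∈ ρ.support | ∃ j ∈ S, j ⋖ i}
  let R : Finset α := {i ∈ ρ.support | ∃ j ∈ S, i ⋖ j}
  have hALR : ρ.support ⊆ A ∪ (L ∪ R) := fun i hi => by
    simpa [A, L, R, Perm.mem_support.1 hi] using mem_or_exists_covBy_of_mem_support hsep hρ hi
  have hAIL : ρ.support ⊆ A ∪ (I ∪ L) := fun i hi => by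
    simpa [A, I, L, Perm.mem_support.1 hi] using
      mem_or_symm_mem_or_exists_covBy_of_mem_support hsep hρ hi
  have hA : #A = #(S ∩ ρ.support) := by rw [inter_comm, ← filter_mem_eq_inter]
  have hI : #I ≤ #(S ∩ ρ.support) := card_filter_symm_mem_le
  have hL : #L ≤ #(S \ ρ.support) :=
    card_filter_exists_rel_le (fun _ _ _ h h' => h.unique_right h') fun _ _ h => (hsep h).symm
  have hR : #R ≤ #(S \ ρ.support) :=
    card_filter_exists_rel_le (fun _ _ _ h h' => h.unique_left h') hsep
  have hS : #(S ∩ ρ.support) + #(S \ ρ.support) = #S := card_inter_add_card_sdiff S ρ.support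
  have hsum_le (X Y Z : Finset α) (h : ρ.support ⊆ X ∪ (Y ∪ Z)) : #ρ.support ≤ #X + (#Y + #Z) :=
    (card_le_card h).trans <| (card_union_le _ _).trans <| by grw [card_union_le]
  have := hsum_le A L R hALR
  have := hsum_le A I L hAIL
  lia

end Displaced

section Hamming

lemma hammingDist_comp_right_le {ι κ : Type*} {β : κ → Type*} [Fintype ι] [Fintype κ]
    [∀ k, DecidableEq (β k)] {e : ι → κ} (he : e.Injective) (x y : ∀ k, β k) :
    hammingDist (fun i => x (e i)) (fun i => y (e i)) ≤ hammingDist x y :=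
  card_le_card_of_injOn e (fun _ hi => by simpa using hi) he.injOn

lemma hammingDist_coe_perm {α : Type*} [DecidableEq α] [Fintype α] (σ π : Perm α) :
    hammingDist σ π = #(π⁻¹ * σ).support :=
  congrArg card <| by
    ext i
    simp only [mem_filter_univ, Perm.mem_support, Perm.mul_apply, ne_eq, Perm.inv_eq_iff_eq]

end Hamming

lemma eq_or_eq_of_covBy_of_forall_even {n : ℕ} {β : Type*} {x y : Fin n → β}
    (heven : ∀ j : Fin n, Even (j : ℕ) → x j = y j) ⦃i j : Fin n⦄ (hij : i ⋖ j) :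
    x i = y i ∨ x j = y j := by
  have hsucc : (i : ℕ) + 1 = j := by simpa using hij
  refine (Nat.even_or_odd (i : ℕ)).imp (heven i) fun hi => heven j ?_
  exact hsucc ▸ hi.add_one

theorem interleave_identity_translocDist_general {n : ℕ} (σ π : Perm (Fin n))
    (hsep : ∀ ⦃i j⦄, i ⋖ j → σ i = π i ∨ σ j = π j) :
    2 * hammingDist σ π ≤ 3 * translocDist σ π := by
  obtain ⟨S, hcard, hmono⟩ := exists_card_le_translocDist_strictMonoOn σ π
  calc 2 * hammingDist σ π = 2 * #(π⁻¹ * σ).support := by rw [hammingDist_coe_perm]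
    _ ≤ 3 * #S := two_mul_card_support_le_of_strictMonoOn
        (by simpa only [Perm.mul_apply, Perm.inv_eq_iff_eq] using hsep) hmono
    _ ≤ 3 * translocDist σ π := Nat.mul_le_mul_left 3 hcard

/-- Let `p ≥ 1`, `n = 2p−1`, and `μ = (1,2,…,p)`. Let `σ₁, σ₂` be bijections from
`[p−1]` onto `{p+1,…,2p−1}` (here: injective maps `Fin (p−1) → Fin (2p−1)` whose values
lie in the top `p−1` elements), and let `μ∘σᵢ ∈ S_n` be the interleaved permutation
`(1, σᵢ(1), 2, σᵢ(2), …, p−1, σᵢ(p−1), p)` (in 0-indexed form: even positions `2k`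
hold `k`, odd positions `2k+1` hold `σᵢ(k)`). If `σ₁` and `σ₂` differ in at least `d`
positions, then `d∘(μ∘σ₁, μ∘σ₂) ≥ ⌈2d/3⌉`. -/
theorem interleave_identity_translocDist (p : ℕ) (hp : 1 ≤ p) (d : ℕ)
    (f₁ f₂ : Fin (p - 1) → Fin (2 * p - 1))
    (hf₁ : Function.Injective f₁ ∧ ∀ k, p ≤ (f₁ k : ℕ))
    (hf₂ : Function.Injective f₂ ∧ ∀ k, p ≤ (f₂ k : ℕ))
    (σ₁ σ₂ : Equiv.Perm (Fin (2 * p - 1)))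
    (hσ₁ : ∀ j : Fin (2 * p - 1), σ₁ j =
      if h : (j : ℕ) % 2 = 0 then ⟨(j : ℕ) / 2, by have := j.isLt; omega⟩
      else f₁ ⟨(j : ℕ) / 2, by have := j.isLt; omega⟩)
    (hσ₂ : ∀ j : Fin (2 * p - 1), σ₂ j =
      if h : (j : ℕ) % 2 = 0 then ⟨(j : ℕ) / 2, by have := j.isLt; omega⟩
      else f₂ ⟨(j : ℕ) / 2, by have := j.isLt; omega⟩)
    (hd : d ≤ (Finset.univ.filter fun k => f₁ k ≠ f₂ k).card) :
    (2 * d + 2) / 3 ≤ translocDist σ₁ σ₂ := by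
  have heven (j : Fin (2 * p - 1)) (hj : Even (j : ℕ)) : σ₁ j = σ₂ j := by
    rw [hσ₁, hσ₂, dif_pos (Nat.even_iff.1 hj), dif_pos (Nat.even_iff.1 hj)]
  have hodd₁ (k : Fin (p - 1)) : σ₁ ⟨2 * k + 1, by lia⟩ = f₁ k := by
    simp [hσ₁, Nat.mul_add_div]
  have hodd₂ (k : Fin (p - 1)) : σ₂ ⟨2 * k + 1, by lia⟩ = f₂ k := by
    simp [hσ₂, Nat.mul_add_div]
  have hle : hammingDist f₁ f₂ ≤ hammingDist σ₁ σ₂ := by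
    have hinj : Function.Injective fun k : Fin (p - 1) =>
        (⟨2 * k + 1, by lia⟩ : Fin (2 * p - 1)) := fun k l hkl => by simpa [Fin.ext_iff] using hkl
    simpa only [hodd₁, hodd₂] using hammingDist_comp_right_le hinj σ₁ σ₂
  have hmain : 2 * hammingDist σ₁ σ₂ ≤ 3 * translocDist σ₁ σ₂ :=
    interleave_identity_translocDist_general σ₁ σ₂ (eq_or_eq_of_covBy_of_forall_even heven)
  have hdist : d ≤ hammingDist f₁ f₂ := hd
  lia
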